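/- Let b_1, …, b_l be a (3/4)-LLL-reduced basis of a lattice in ℝ^m and let R = ‖b_1‖. Then every lattice vector v = Σ_{i=1}^{l} c_i b_i with integer coefficients c_i and ‖v‖ < R satisfies |c_{l−i}| < 2^{l+i−1} for all i = 0, 1, …, l−1. -/

import Mathlib

open Finset
open scoped RealInnerProductSpace

/-!
Pairing `v = ∑ i, c i • b i` with the `i`-th Gram–Schmidt vector and applying Cauchy–Schwarz bounds
the combination `c i + ∑ j > i, μ i j * c j` by `‖v‖` over the length of that vector. In an
LLL-reduced basis the Gram–Schmidt lengths decay at most geometrically from `‖b 0‖ > ‖v‖`, so this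
quotient is bounded, and size reduction makes `|c i|` less than a constant plus half the sum of the
later coefficients in absolute value. Back substitution, starting from the last coefficient, then
bounds all of them geometrically.
-/

section DiscreteGronwall

variable {n : ℕ}

lemma sum_Ioi_pow_rev (r : ℝ) (i : Fin n) :
    ∑ j ∈ Ioi i, r ^ (j.rev : ℕ) = ∑ k ∈ range i.rev, r ^ k := by
  rw [← Nat.Iio_eq_range, ← Fin.map_valEmbedding_Iio, ← Fin.map_revPerm_Ioi, sum_map, sum_map]
  rfl

lemma lt_mul_pow_rev_of_lt_add_mul_sum_Ioi {d : Fin n → ℝ} {A η : ℝ} (hη : 0 ≤ η)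
    (hd : ∀ i, d i < A + η * ∑ j ∈ Ioi i, d j) (i : Fin n) :
    d i < A * (1 + η) ^ (i.rev : ℕ) := by
  induction i using WellFoundedGT.induction with
  | ind i ih =>
    calc d i < A + η * ∑ j ∈ Ioi i, d j := hd i
      _ ≤ A + η * ∑ j ∈ Ioi i, A * (1 + η) ^ (j.rev : ℕ) := by
        gcongr with j hj
        exact (ih j (mem_Ioi.mp hj)).le
      _ = A + A * ((∑ k ∈ range i.rev, (1 + η) ^ k) * (1 + η - 1)) := by
        rw [← mul_sum, sum_Ioi_pow_rev]
        ring
      _ = A * (1 + η) ^ (i.rev : ℕ) := by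
        rw [geom_sum_mul]
        ring

end DiscreteGronwall

section GramSchmidt

open InnerProductSpace

variable {ι E : Type*} [NormedAddCommGroup E] [InnerProductSpace ℝ E]
  [LinearOrder ι] [LocallyFiniteOrderBot ι] [WellFoundedLT ι]

/-- The Gram–Schmidt coefficient `μ_{j,i}` of `b i` along the `j`-th Gram–Schmidt vector, with the
index of that vector first. It is `0` when that vector vanishes. -/
noncomputable def gramSchmidtCoeff (b : ι → E) (j i : ι) : ℝ :=
  ⟪gramSchmidt ℝ b j, b i⟫ / ‖gramSchmidt ℝ b j‖ ^ 2

/-- A family is size-reduced if all its Gram–Schmidt coefficients `μ_{j,i}` with `j < i` have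
absolute value at most `1 / 2`. -/
def IsSizeReduced (b : ι → E) : Prop :=
  ∀ ⦃j i⦄, j < i → |gramSchmidtCoeff b j i| ≤ 1 / 2

lemma eq_gramSchmidt_of_eq_sub_sum {b bt : ι → E} {μ : ι → ι → ℝ}
    (hμ : ∀ i j, j < i → μ j i = ⟪b i, bt j⟫ / ⟪bt j, bt j⟫)
    (hbt : ∀ i, bt i = b i - ∑ j ∈ Iio i, μ j i • bt j) : bt = gramSchmidt ℝ b := by
  ext i
  induction i using WellFoundedLT.induction with
  | ind i ih =>
    rw [hbt, gramSchmidt_def]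
    congr 1
    refine sum_congr rfl fun j hj ↦ ?_
    have hji := mem_Iio.mp hj
    rw [hμ i j hji, ih j hji, Submodule.starProjection_singleton, real_inner_comm,
      real_inner_self_eq_norm_sq, RCLike.ofReal_real_eq_id, id]

lemma inner_gramSchmidt_self (b : ι → E) (i : ι) :
    ⟪gramSchmidt ℝ b i, b i⟫ = ‖gramSchmidt ℝ b i‖ ^ 2 := by
  conv_lhs => rw [gramSchmidt_def'' ℝ b i]
  rw [inner_add_right, inner_sum, real_inner_self_eq_norm_sq, add_eq_left]
  refine sum_eq_zero fun j hj ↦ ?_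
  rw [inner_smul_right, gramSchmidt_orthogonal ℝ b (mem_Iio.mp hj).ne', mul_zero]

lemma inner_gramSchmidt_eq_gramSchmidtCoeff_mul (b : ι → E) (j i : ι) :
    ⟪gramSchmidt ℝ b j, b i⟫ = gramSchmidtCoeff b j i * ‖gramSchmidt ℝ b j‖ ^ 2 := by
  rcases eq_or_ne (gramSchmidt ℝ b j) 0 with hj | hj
  · simp [hj]
  · rw [gramSchmidtCoeff, div_mul_cancel₀ _ (by simpa using hj)]

variable [Fintype ι] [LocallyFiniteOrderTop ι]

lemma inner_gramSchmidt_sum_smul (b : ι → E) (c : ι → ℝ) (i : ι) :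
    ⟪gramSchmidt ℝ b i, ∑ j, c j • b j⟫ =
      (c i + ∑ j ∈ Ioi i, gramSchmidtCoeff b i j * c j) * ‖gramSchmidt ℝ b i‖ ^ 2 := by
  calc ⟪gramSchmidt ℝ b i, ∑ j, c j • b j⟫
      = ∑ j, c j * ⟪gramSchmidt ℝ b i, b j⟫ := by simp only [inner_sum, inner_smul_right]
    _ = ∑ j ∈ Ici i, c j * ⟪gramSchmidt ℝ b i, b j⟫ := by
      refine (sum_subset (subset_univ _) fun j _ hj ↦ ?_).symm
      rw [gramSchmidt_inv_triangular ℝ b (by simpa using hj), mul_zero]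
    _ = c i * ‖gramSchmidt ℝ b i‖ ^ 2 + ∑ j ∈ Ioi i, c j * ⟪gramSchmidt ℝ b i, b j⟫ := by
      rw [← Ioi_insert, sum_insert (by simp), inner_gramSchmidt_self]
    _ = _ := by
      simp only [inner_gramSchmidt_eq_gramSchmidtCoeff_mul, add_mul, sum_mul]
      congr! 2
      ring

lemma abs_add_sum_mul_norm_gramSchmidt_le (b : ι → E) (c : ι → ℝ) (i : ι) :
    |c i + ∑ j ∈ Ioi i, gramSchmidtCoeff b i j * c j| * ‖gramSchmidt ℝ b i‖ ≤
      ‖∑ j, c j • b j‖ := by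
  rcases eq_or_ne (gramSchmidt ℝ b i) 0 with hi | hi
  · simp [hi]
  · have hCS := abs_real_inner_le_norm (gramSchmidt ℝ b i) (∑ j, c j • b j)
    rw [inner_gramSchmidt_sum_smul, abs_mul, abs_sq] at hCS
    refine le_of_mul_le_mul_left ?_ (norm_pos_iff.mpr hi)
    linarith

lemma IsSizeReduced.abs_lt_add_half_mul_sum {b : ι → E} (hb : IsSizeReduced b) {c : ι → ℝ} {A : ℝ}
    {i : ι} (hc : ‖∑ j, c j • b j‖ < A * ‖gramSchmidt ℝ b i‖) :
    |c i| < A + 1 / 2 * ∑ j ∈ Ioi i, |c j| := by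
  have h_comb : |c i + ∑ j ∈ Ioi i, gramSchmidtCoeff b i j * c j| < A :=
    lt_of_mul_lt_mul_right ((abs_add_sum_mul_norm_gramSchmidt_le b c i).trans_lt hc)
      (norm_nonneg _)
  have h_tail : |∑ j ∈ Ioi i, gramSchmidtCoeff b i j * c j| ≤ 1 / 2 * ∑ j ∈ Ioi i, |c j| := by
    rw [mul_sum]
    refine (abs_sum_le_sum_abs _ _).trans (sum_le_sum fun j hj ↦ ?_)
    rw [abs_mul]
    gcongr
    exact hb (mem_Ioi.mp hj)
  have h_triangle := abs_sub (c i + ∑ j ∈ Ioi i, gramSchmidtCoeff b i j * c j)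
    (∑ j ∈ Ioi i, gramSchmidtCoeff b i j * c j)
  rw [add_sub_cancel_right] at h_triangle
  linarith

end GramSchmidt

section LLL

open InnerProductSpace

variable {E : Type*} [NormedAddCommGroup E] [InnerProductSpace ℝ E] {n : ℕ} {δ : ℝ}
  {b : Fin (n + 1) → E}

/-- A family of `n + 1` vectors is `δ`-LLL-reduced if it is size-reduced and consecutive
Gram–Schmidt vectors satisfy the Lovász condition. Linear independence is not part of the
definition. -/
structure IsLLLReduced (δ : ℝ) (b : Fin (n + 1) → E) : Prop where
  isSizeReduced : IsSizeReduced b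
  lovasz (i : Fin n) : (δ - gramSchmidtCoeff b i.castSucc i.succ ^ 2) *
    ‖gramSchmidt ℝ b i.castSucc‖ ^ 2 ≤ ‖gramSchmidt ℝ b i.succ‖ ^ 2

namespace IsLLLReduced

lemma of_eq_sub_sum {bt : Fin (n + 1) → E} {μ : Fin (n + 1) → Fin (n + 1) → ℝ}
    (hμ : ∀ i j, j < i → μ j i = ⟪b i, bt j⟫ / ⟪bt j, bt j⟫)
    (hbt : ∀ i, bt i = b i - ∑ j ∈ Iio i, μ j i • bt j)
    (hsize : ∀ i j, j < i → |μ j i| ≤ 1 / 2)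
    (hlovasz : ∀ i : Fin n,
      (δ - μ i.castSucc i.succ ^ 2) * ‖bt i.castSucc‖ ^ 2 ≤ ‖bt i.succ‖ ^ 2) :
    IsLLLReduced δ b := by
  obtain rfl := eq_gramSchmidt_of_eq_sub_sum hμ hbt
  have h_coeff {j i : Fin (n + 1)} (hji : j < i) : gramSchmidtCoeff b j i = μ j i := by
    rw [hμ i j hji, gramSchmidtCoeff, real_inner_comm, real_inner_self_eq_norm_sq]
  refine ⟨fun j i hji ↦ ?_, fun i ↦ ?_⟩
  · rw [h_coeff hji]
    exact hsize i j hji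
  · rw [h_coeff i.castSucc_lt_succ]
    exact hlovasz i

lemma sub_quarter_mul_norm_sq_le (hb : IsLLLReduced δ b) (i : Fin n) :
    (δ - 1 / 4) * ‖gramSchmidt ℝ b i.castSucc‖ ^ 2 ≤ ‖gramSchmidt ℝ b i.succ‖ ^ 2 := by
  have h_coeff : gramSchmidtCoeff b i.castSucc i.succ ^ 2 ≤ (1 / 2) ^ 2 :=
    sq_le_sq.mpr ((hb.isSizeReduced i.castSucc_lt_succ).trans (le_abs_self _))
  refine le_trans ?_ (hb.lovasz i)
  gcongr
  linarith

lemma pow_mul_norm_sq_le (hb : IsLLLReduced δ b) (hδ : 1 / 4 ≤ δ) (i : Fin (n + 1)) :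
    (δ - 1 / 4) ^ (i : ℕ) * ‖b 0‖ ^ 2 ≤ ‖gramSchmidt ℝ b i‖ ^ 2 := by
  induction i using Fin.induction with
  | zero =>
    have h_zero : gramSchmidt ℝ b 0 = b 0 := gramSchmidt_bot ℝ b
    simp [h_zero]
  | succ i ih =>
    calc (δ - 1 / 4) ^ (i.succ : ℕ) * ‖b 0‖ ^ 2
        = (δ - 1 / 4) * ((δ - 1 / 4) ^ (i.castSucc : ℕ) * ‖b 0‖ ^ 2) := by
          rw [Fin.val_succ, Fin.val_castSucc, pow_succ', mul_assoc]
      _ ≤ (δ - 1 / 4) * ‖gramSchmidt ℝ b i.castSucc‖ ^ 2 :=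
          mul_le_mul_of_nonneg_left ih (sub_nonneg.mpr hδ)
      _ ≤ ‖gramSchmidt ℝ b i.succ‖ ^ 2 := hb.sub_quarter_mul_norm_sq_le i

lemma norm_le_inv_sqrt_pow_mul (hb : IsLLLReduced δ b) (hδ : 1 / 4 < δ) (hδ' : δ ≤ 1)
    (i : Fin (n + 1)) : ‖b 0‖ ≤ (√(δ - 1 / 4))⁻¹ ^ n * ‖gramSchmidt ℝ b i‖ := by
  have hq : 0 < √(δ - 1 / 4) := Real.sqrt_pos.mpr (sub_pos.mpr hδ)
  rw [inv_pow, ← div_eq_inv_mul, le_div_iff₀ (by positivity), mul_comm]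
  calc √(δ - 1 / 4) ^ n * ‖b 0‖ ≤ √(δ - 1 / 4) ^ (i : ℕ) * ‖b 0‖ := by
        have hq' : √(δ - 1 / 4) ≤ 1 := Real.sqrt_le_one.mpr (by linarith)
        gcongr ?_ * _
        exact pow_le_pow_of_le_one hq.le hq' i.is_le
    _ ≤ ‖gramSchmidt ℝ b i‖ := by
        refine le_of_sq_le_sq ?_ (norm_nonneg _)
        rw [mul_pow, pow_right_comm, Real.sq_sqrt (sub_nonneg.mpr hδ.le)]
        exact hb.pow_mul_norm_sq_le hδ.le i

end IsLLLReduced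

theorem lll_three_quarters_coefficient_bound_general (hb : IsLLLReduced δ b) (hδ : 1 / 4 < δ)
    (hδ' : δ ≤ 1) {c : Fin (n + 1) → ℝ} (hc : ‖∑ i, c i • b i‖ < ‖b 0‖) (i : Fin (n + 1)) :
    |c i| < (√(δ - 1 / 4))⁻¹ ^ n * (3 / 2) ^ (i.rev : ℕ) := by
  have h_rec (j : Fin (n + 1)) :
      |c j| < (√(δ - 1 / 4))⁻¹ ^ n + 1 / 2 * ∑ k ∈ Ioi j, |c k| :=
    hb.isSizeReduced.abs_lt_add_half_mul_sum
      (hc.trans_le (hb.norm_le_inv_sqrt_pow_mul hδ hδ' j))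
  have h_ratio : (3 / 2 : ℝ) = 1 + 1 / 2 := by norm_num
  rw [h_ratio]
  exact lt_mul_pow_rev_of_lt_add_mul_sum_Ioi one_half_pos.le h_rec i

end LLL

lemma inv_sqrt_pow_mul_pow_le_two_pow (n k : ℕ) :
    (√(3 / 4 - 1 / 4))⁻¹ ^ n * (3 / 2) ^ k ≤ (2 : ℝ) ^ (n + k) := by
  have h_sqrt : 2⁻¹ ≤ √(3 / 4 - 1 / 4 : ℝ) := Real.le_sqrt_of_sq_le (by norm_num)
  rw [pow_add]
  gcongr
  · exact inv_le_of_inv_le₀ two_pos h_sqrt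
  · norm_num

/-- For a (3/4)-LLL-reduced basis `b_1, …, b_l` and `R = ‖b_1‖`, every
lattice vector `v = Σ c_i b_i` with integer coefficients and `‖v‖ < R` satisfies
`|c_{l−i}| < 2^(l+i−1)` for all `i = 0, 1, …, l−1`. -/
theorem lll_three_quarters_coefficient_bound
    (m l : ℕ) (hl : 1 ≤ l) (hlm : l ≤ m)
    (b bt : Fin l → EuclideanSpace ℝ (Fin m))
    (μ : Fin l → Fin l → ℝ)
    (hind : LinearIndependent ℝ b)
    (hμ : ∀ i j : Fin l, j < i → μ j i = ⟪b i, bt j⟫ / ⟪bt j, bt j⟫)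
    (hbt : ∀ i : Fin l, bt i = b i - ∑ j ∈ Finset.Iio i, μ j i • bt j)
    (hsize : ∀ i j : Fin l, j < i → |μ j i| ≤ 1/2)
    (hLovasz : ∀ (i : Fin l) (h : (i : ℕ) + 1 < l),
      ‖bt ⟨(i : ℕ) + 1, h⟩‖ ^ 2 ≥ (3/4 - (μ i ⟨(i : ℕ) + 1, h⟩) ^ 2) * ‖bt i‖ ^ 2)
    (R : ℝ) (hR : R = ‖b ⟨0, by omega⟩‖)
    (c : Fin l → ℤ) (v : EuclideanSpace ℝ (Fin m))
    (hv : v = ∑ i, (c i : ℝ) • b i)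
    (hvR : ‖v‖ < R) :
    ∀ i : ℕ, ∀ h : i < l,
      |(c ⟨l - 1 - i, by omega⟩ : ℝ)| < 2 ^ (l + i - 1) := by
  subst hv hR
  obtain ⟨n, rfl⟩ := Nat.exists_eq_add_of_le' hl
  intro i hi
  have hb : IsLLLReduced (3 / 4) b :=
    .of_eq_sub_sum hμ hbt hsize fun i ↦ hLovasz i.castSucc (Nat.succ_lt_succ i.is_lt)
  have h_bound := lll_three_quarters_coefficient_bound_general hb (by norm_num) (by norm_num)
    hvR ⟨n - i, by omega⟩
  have h_rev : n + 1 + i - 1 = n + (Fin.rev (⟨n - i, by omega⟩ : Fin (n + 1)) : ℕ) := by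
    simp only [Fin.val_rev]
    omega
  rw [h_rev]
  exact h_bound.trans_le (inv_sqrt_pow_mul_pow_le_two_pow n _)
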